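/- arXiv:2305.13293 — 8 statements merged into one kernel-verified Lean document; each statement's English description precedes it below -/
import Mathlib

section
/- Let 0 < L < U be reals and Φ(z) = (L/e)·((U·e)/L)^z. For every z_T ∈ [1/(ln(U/L)+1), 1], the integral ∫₀^{z_T} max(L, Φ(z)) dz equals Φ(z_T)/(ln(U/L)+1); in particular Φ(z_T) = (ln(U/L)+1) · ∫₀^{z_T} max(L, Φ(z)) dz. (This is the integral identity underlying the (ln(U/L)+1)-competitiveness of the ZCL algorithm.) -/
/-- Integral identity underlying the `(ln(U/L)+1)`-competitiveness of the ZCL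
algorithm: for any final utilization `z_T ≥ 1/(ln(U/L)+1)`, the integral of the
clamped threshold `max(L, Φ(z))` over `[0, z_T]` equals `Φ(z_T)/(ln(U/L)+1)`. -/
theorem zcl_integral_identity (L U : ℝ) (hL : 0 < L) (hLU : L < U) :
    ∀ zT ∈ Set.Icc (1 / (Real.log (U / L) + 1)) (1 : ℝ),
      (∫ z in (0 : ℝ)..zT,
          max L ((L / Real.exp 1) * ((U * Real.exp 1) / L) ^ z)) =
        (L / Real.exp 1) * ((U * Real.exp 1) / L) ^ zT / (Real.log (U / L) + 1) ∧
      (L / Real.exp 1) * ((U * Real.exp 1) / L) ^ zT =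
        (Real.log (U / L) + 1) *
          ∫ z in (0 : ℝ)..zT,
            max L ((L / Real.exp 1) * ((U * Real.exp 1) / L) ^ z) := by
  intro zT hz
  have hc : 0 < Real.log (U / L) + 1 := by
    have : 0 < Real.log (U / L) := Real.log_pos ((one_lt_div hL).2 hLU)
    linarith
  have hU : 0 < U := hL.trans hLU
  have hPhi : ∀ z : ℝ, (L / Real.exp 1) * ((U * Real.exp 1) / L) ^ z
      = L * Real.exp ((Real.log (U / L) + 1) * z - 1) := by
    intro z
    have h1 : 0 < U * Real.exp 1 / L := by positivity
    have h2 : Real.log (U * Real.exp 1 / L) = Real.log (U / L) + 1 := by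
      rw [show U * Real.exp 1 / L = U / L * Real.exp 1 by ring,
        Real.log_mul (by positivity) (by positivity), Real.log_exp]
    rw [Real.rpow_def_of_pos h1, h2, Real.exp_sub]
    ring
  simp only [hPhi]
  generalize Real.log (U / L) + 1 = c at *
  obtain ⟨hz1, -⟩ := hz
  have hc' : c * (1 / c) = 1 := by field_simp
  have hcont : Continuous fun z : ℝ => max L (L * Real.exp (c * z - 1)) := by fun_prop
  have hA : (∫ z in (0 : ℝ)..(1 / c), max L (L * Real.exp (c * z - 1))) = L / c := by
    have : (∫ z in (0 : ℝ)..(1 / c), max L (L * Real.exp (c * z - 1)))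
        = ∫ z in (0 : ℝ)..(1 / c), L := by
      apply intervalIntegral.integral_congr
      intro z hz
      rw [Set.uIcc_of_le (by positivity)] at hz
      have h3 : c * z ≤ 1 := hc' ▸ mul_le_mul_of_nonneg_left hz.2 hc.le
      have h4 : Real.exp (c * z - 1) ≤ 1 := Real.exp_le_one_iff.2 (by linarith)
      exact max_eq_left (by nlinarith)
    rw [this, intervalIntegral.integral_const, smul_eq_mul]
    ring
  have hB : (∫ z in (1 / c)..zT, max L (L * Real.exp (c * z - 1)))
      = L * Real.exp (c * zT - 1) / c - L / c := by
    have : (∫ z in (1 / c)..zT, max L (L * Real.exp (c * z - 1)))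
        = ∫ z in (1 / c)..zT, L * Real.exp (c * z - 1) := by
      apply intervalIntegral.integral_congr
      intro z hz
      rw [Set.uIcc_of_le hz1] at hz
      have h3 : 1 ≤ c * z := hc' ▸ mul_le_mul_of_nonneg_left hz.1 hc.le
      have h4 : 1 ≤ Real.exp (c * z - 1) := Real.one_le_exp (by linarith)
      exact max_eq_right (by nlinarith)
    rw [this, intervalIntegral.integral_eq_sub_of_hasDerivAt
      (f := fun z => L * Real.exp (c * z - 1) / c)]
    · simp only [hc']
      simp
    · intro z _
      have h : HasDerivAt (fun z => L * Real.exp (c * z - 1) / c)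
          (L * (Real.exp (c * z - 1) * (c * 1)) / c) z :=
        (((((hasDerivAt_id z).const_mul c).sub_const 1).exp).const_mul L).div_const c
      have h5 : L * (Real.exp (c * z - 1) * (c * 1)) / c = L * Real.exp (c * z - 1) := by
        field_simp
      rwa [h5] at h
    · exact Continuous.intervalIntegrable (by fun_prop) _ _
  have hI : (∫ z in (0 : ℝ)..zT, max L (L * Real.exp (c * z - 1)))
      = L * Real.exp (c * zT - 1) / c := by
    rw [← intervalIntegral.integral_add_adjacent_intervals
      (hcont.intervalIntegrable 0 (1 / c)) (hcont.intervalIntegrable (1 / c) zT), hA, hB]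
    ring
  rw [hI]
  refine ⟨rfl, ?_⟩
  field_simp
end

section
/- Let 0 < L < U be reals, α ∈ [1/(ln(U/L)+1), 1), ℓ = α + (α−1)/ln(U/L), and Φ^α(z) = (L/e)·((U·e)/L)^{(z−ℓ)/(1−ℓ)}. Then for every z_T ∈ [α, 1], the denominator L·(α − (1−ℓ)/(ln(U/L)+1)) + (1−ℓ)·Φ^α(z_T)/(ln(U/L)+1) is positive and Φ^α(z_T) / [ L·(α − (1−ℓ)/(ln(U/L)+1)) + (1−ℓ)·Φ^α(z_T)/(ln(U/L)+1) ] ≤ U·(ln(U/L)+1) / [ L·α·(ln(U/L)+1) + (U−L)·(1−ℓ) ]. (This is the analytic core of the theorem that the baseline algorithm is U(ln(U/L)+1)/(Lα(ln(U/L)+1)+(U−L)(1−ℓ))-competitive.) -/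
/-- Analytic core of the competitiveness bound for the baseline algorithm: for
every final utilization `z_T ∈ [α, 1]`, the collected value
`L·(α − (1−ℓ)/(ln(U/L)+1)) + (1−ℓ)·Φ^α(z_T)/(ln(U/L)+1)` is positive and the
ratio of `Φ^α(z_T)` to it is at most
`U·(ln(U/L)+1) / (L·α·(ln(U/L)+1) + (U−L)·(1−ℓ))`. -/
theorem baseline_competitive_ratio (L U α : ℝ) (hL : 0 < L) (hLU : L < U)
    (hα : α ∈ Set.Ico (1 / (Real.log (U / L) + 1)) (1 : ℝ))
    (ℓ : ℝ) (hℓ : ℓ = α + (α - 1) / Real.log (U / L))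
    (Φ : ℝ → ℝ)
    (hΦ : ∀ z, Φ z = (L / Real.exp 1) * ((U * Real.exp 1) / L) ^ ((z - ℓ) / (1 - ℓ))) :
    ∀ zT ∈ Set.Icc α (1 : ℝ),
      0 < L * (α - (1 - ℓ) / (Real.log (U / L) + 1)) +
          (1 - ℓ) * Φ zT / (Real.log (U / L) + 1) ∧
      Φ zT /
          (L * (α - (1 - ℓ) / (Real.log (U / L) + 1)) +
            (1 - ℓ) * Φ zT / (Real.log (U / L) + 1)) ≤
        U * (Real.log (U / L) + 1) /
          (L * α * (Real.log (U / L) + 1) + (U - L) * (1 - ℓ)) := by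
  intro zT hz
  have hk : 0 < Real.log (U / L) := Real.log_pos ((one_lt_div hL).2 hLU)
  obtain ⟨hα1, hα2⟩ := hα
  obtain ⟨_, hz2⟩ := hz
  have hU : 0 < U := hL.trans hLU
  generalize Real.log (U / L) = k at *
  have hk1 : 0 < k + 1 := by linarith
  obtain ⟨m, hm⟩ : ∃ m, m = (1 - α) / k := ⟨_, rfl⟩
  have hm0 : 0 < m := by rw [hm]; exact div_pos (by linarith) hk
  have hl : 1 - ℓ = m * (k + 1) := by
    rw [hℓ, hm]; field_simp; ring
  have hmα : m ≤ α := by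
    rw [hm, div_le_iff₀ hk]
    rw [div_le_iff₀ hk1] at hα1
    linarith
  have hl0 : 0 < 1 - ℓ := by rw [hl]; positivity
  have he : 1 ≤ Real.exp 1 := Real.one_le_exp (by norm_num)
  have hP : 0 < Φ zT := by rw [hΦ]; positivity
  have hPU : Φ zT ≤ U := by
    have hb : 1 ≤ U * Real.exp 1 / L := by
      rw [one_le_div hL]; nlinarith
    have h1 : (U * Real.exp 1 / L) ^ ((zT - ℓ) / (1 - ℓ)) ≤ U * Real.exp 1 / L := by
      calc _ ≤ (U * Real.exp 1 / L) ^ (1 : ℝ) := by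
            apply Real.rpow_le_rpow_of_exponent_le hb
            rw [div_le_one hl0]; linarith
        _ = _ := Real.rpow_one _
    rw [hΦ]
    calc _ ≤ L / Real.exp 1 * (U * Real.exp 1 / L) := by gcongr
      _ = U := by field_simp
  generalize Φ zT = P at *
  have e1 : (1 - ℓ) / (k + 1) = m := by rw [hl]; field_simp
  have e2 : (1 - ℓ) * P / (k + 1) = m * P := by rw [hl]; field_simp
  have e3 : U * (k + 1) / (L * α * (k + 1) + (U - L) * (1 - ℓ)) =
      U / (L * (α - m) + m * U) := by
    have : L * α * (k + 1) + (U - L) * (1 - ℓ) = (L * (α - m) + m * U) * (k + 1) := by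
      rw [hl]; ring
    rw [this, mul_div_mul_right _ _ hk1.ne']
  have hA : 0 ≤ L * (α - m) := mul_nonneg hL.le (by linarith)
  have hD : 0 < L * (α - m) + m * P := by positivity
  have hD2 : 0 < L * (α - m) + m * U := by positivity
  rw [e1, e2, e3]
  refine ⟨hD, ?_⟩
  rw [div_le_div_iff₀ hD hD2]
  nlinarith [mul_le_mul_of_nonneg_right hPU hA]
end

section
/- Let L > 0, U > 0 be reals and α ∈ (0,1). Then there exists a unique β > 0 satisfying L·α·β = U·exp(β·(α−1)). (This unique fixed point is the Pareto-optimal competitive ratio β = W(U(1−α)/(Lα))/(1−α), where W is the Lambert W function, used to define the ECT algorithm's threshold.) -/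
/-- There exists a unique `β > 0` with `L·α·β = U·exp(β·(α−1))`; this is the
Pareto-optimal competitive ratio `β = W(U(1−α)/(Lα))/(1−α)` used by the ECT
algorithm. -/
theorem ect_beta_exists_unique (L U α : ℝ) (hL : 0 < L) (hU : 0 < U)
    (hα : α ∈ Set.Ioo (0 : ℝ) 1) :
    ∃! β : ℝ, 0 < β ∧ L * α * β = U * Real.exp (β * (α - 1)) := by
  obtain ⟨h0, h1⟩ := hα
  have hLa : 0 < L * α := mul_pos hL h0
  have hmono : StrictMono (fun β : ℝ => L * α * β - U * Real.exp (β * (α - 1))) := by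
    intro x y hxy
    have e1 : L * α * x < L * α * y := mul_lt_mul_of_pos_left hxy hLa
    have e2 : Real.exp (y * (α - 1)) < Real.exp (x * (α - 1)) :=
      Real.exp_lt_exp.mpr (by nlinarith)
    have e3 := mul_lt_mul_of_pos_left e2 hU
    show L * α * x - U * Real.exp (x * (α - 1)) < L * α * y - U * Real.exp (y * (α - 1))
    linarith
  have hB : 0 < U / (L * α) := div_pos hU hLa
  have hc : ContinuousOn (fun β : ℝ => L * α * β - U * Real.exp (β * (α - 1)))
      (Set.Icc 0 (U / (L * α))) := by fun_prop
  have hz : (0 : ℝ) ∈ Set.Icc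
      ((fun β : ℝ => L * α * β - U * Real.exp (β * (α - 1))) 0)
      ((fun β : ℝ => L * α * β - U * Real.exp (β * (α - 1))) (U / (L * α))) := by
    constructor
    · simp [hU.le]
    · have e1 : Real.exp (U / (L * α) * (α - 1)) ≤ 1 :=
        Real.exp_le_one_iff.mpr (by nlinarith)
      have e2 : L * α * (U / (L * α)) = U := mul_div_cancel₀ U hLa.ne'
      show 0 ≤ L * α * (U / (L * α)) - U * Real.exp (U / (L * α) * (α - 1))
      rw [e2]
      nlinarith
  obtain ⟨b, hb, hfb⟩ := intermediate_value_Icc hB.le hc hz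
  have hfb' : L * α * b - U * Real.exp (b * (α - 1)) = 0 := hfb
  refine ⟨b, ⟨?_, by linarith⟩, ?_⟩
  · have := mul_pos hU (Real.exp_pos (b * (α - 1)))
    exact pos_of_mul_pos_right (by linarith : 0 < L * α * b) hLa.le
  · rintro y ⟨-, hy⟩
    apply hmono.injective
    show L * α * y - U * Real.exp (y * (α - 1)) = L * α * b - U * Real.exp (b * (α - 1))
    linarith
end

section
/- Let 0 < L < U be reals, let α ∈ [1/(ln(U/L)+1), 1), and let β > 0 satisfy L·α·β = U·exp(β·(α−1)). Then α·β ≥ 1, i.e. β ≥ 1/α. (This inequality shows that the ECT threshold jumps upward at utilization α — from L to U·e^{β(α−1)} = L·α·β ≥ L — and it yields the Case I competitive bound Ψ^α(α)/(Lα) = 1/α ≤ β in the proof that ECT is β-competitive.) -/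
/-- For `α ∈ [1/(ln(U/L)+1), 1)` and `β > 0` the solution of
`L·α·β = U·exp(β·(α−1))`, we have `α·β ≥ 1`, i.e. `β ≥ 1/α`. -/
theorem ect_alpha_beta_ge_one (L U α β : ℝ) (hL : 0 < L) (hLU : L < U)
    (hα : α ∈ Set.Ico (1 / (Real.log (U / L) + 1)) (1 : ℝ))
    (hβ : 0 < β) (hfix : L * α * β = U * Real.exp (β * (α - 1))) :
    1 ≤ α * β ∧ 1 / α ≤ β := by
  obtain ⟨h1, h2⟩ := hα
  have hU : 0 < U := hL.trans hLU
  have hl : 0 < Real.log (U / L) := Real.log_pos ((one_lt_div hL).2 hLU)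
  have hexp : Real.exp (Real.log (U / L)) = U / L := Real.exp_log (div_pos hU hL)
  set l := Real.log (U / L) with hldef
  have hα0 : 0 < α := lt_of_lt_of_le (by positivity) h1
  have h3 : 1 ≤ α * (l + 1) := (div_le_iff₀ (by linarith)).1 h1
  have key : α * β = Real.exp (l + β * (α - 1)) := by
    rw [Real.exp_add, hexp]
    field_simp
    linarith
  have main : 1 ≤ α * β := by
    by_contra! h
    have h4 : l + β * (α - 1) < 0 := by
      rw [← Real.exp_lt_one_iff, ← key]
      exact h
    have h5 : α * (l + β * (α - 1)) < 0 := mul_neg_of_pos_of_neg hα0 h4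
    have h6 : 0 < (1 - α * β) * (1 - α) := mul_pos (by linarith) (by linarith)
    nlinarith
  refine ⟨main, ?_⟩
  rw [div_le_iff₀ hα0]
  linarith
end

section
/- (Grönwall-type lemma.) Let 0 < r ≤ M be reals, β > 0, C ∈ ℝ, and let g : ℝ → ℝ be differentiable with continuous derivative on [r, M]. Suppose that for every x ∈ [r, M], C + ∫_r^x u·g'(u) du ≥ x/β. Then for every x ∈ [r, M], g(x) ≥ 1/β − (C − r·g(r))/r + (1/β)·ln(x/r). In particular, if C = r/β then g(x) ≥ g(r) + (1/β)·ln(x/r) for all x ∈ [r, M]. -/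
/-- Grönwall-type lemma: if `g` has continuous derivative `g'` on `[r, M]` and
`C + ∫_r^x u·g'(u) du ≥ x/β` for all `x ∈ [r, M]`, then
`g(x) ≥ 1/β − (C − r·g(r))/r + (1/β)·ln(x/r)` on `[r, M]`; in particular if
`C = r/β` then `g(x) ≥ g(r) + (1/β)·ln(x/r)`. -/
theorem gronwall_lower_bound (r M β C : ℝ) (hr : 0 < r) (hrM : r ≤ M)
    (hβ : 0 < β) (g g' : ℝ → ℝ)
    (hderiv : ∀ x ∈ Set.Icc r M, HasDerivAt g (g' x) x)
    (hcont : ContinuousOn g' (Set.Icc r M))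
    (hcomp : ∀ x ∈ Set.Icc r M, x / β ≤ C + ∫ u in r..x, u * g' u) :
    (∀ x ∈ Set.Icc r M,
        1 / β - (C - r * g r) / r + (1 / β) * Real.log (x / r) ≤ g x) ∧
      (C = r / β → ∀ x ∈ Set.Icc r M,
        g r + (1 / β) * Real.log (x / r) ≤ g x) := by
  have hc : ContinuousOn (fun u => u * g' u) (Set.Icc r M) := continuousOn_id.mul hcont
  have main : ∀ x ∈ Set.Icc r M,
      1 / β - (C - r * g r) / r + (1 / β) * Real.log (x / r) ≤ g x := by
    have hGd : ∀ x ∈ Set.Ioo r M,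
        HasDerivAt (fun x => C + ∫ u in r..x, u * g' u) (x * g' x) x := by
      intro x hx
      refine HasDerivAt.const_add C ?_
      apply intervalIntegral.integral_hasDerivAt_right
      · apply ContinuousOn.intervalIntegrable
        rw [Set.uIcc_of_le hx.1.le]
        exact hc.mono (Set.Icc_subset_Icc_right hx.2.le)
      · exact (hc.mono Set.Ioo_subset_Icc_self).stronglyMeasurableAtFilter isOpen_Ioo x hx
      · exact hc.continuousAt (Icc_mem_nhds hx.1 hx.2)
    have hGc : ContinuousOn (fun x => C + ∫ u in r..x, u * g' u) (Set.Icc r M) := by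
      refine continuousOn_const.add ?_
      have := intervalIntegral.continuousOn_primitive_interval
        (μ := MeasureTheory.volume) (f := fun u => u * g' u) (a := r) (b := M)
        (by rw [Set.uIcc_of_le hrM]; exact hc.integrableOn_Icc)
      rwa [Set.uIcc_of_le hrM] at this
    have hG0 : (fun x => C + ∫ u in r..x, u * g' u) r = C := by simp
    have hG : ∀ x ∈ Set.Icc r M, x / β ≤ (fun x => C + ∫ u in r..x, u * g' u) x := hcomp
    generalize (fun x => C + ∫ u in r..x, u * g' u) = G at hGd hGc hG0 hG
    have hpos : ∀ x ∈ Set.Icc r M, 0 < x := fun x hx => hr.trans_le hx.1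
    have hmono : MonotoneOn (fun x => g x - G x / x - (1 / β) * Real.log x) (Set.Icc r M) := by
      have hd : ∀ x ∈ Set.Ioo r M, HasDerivAt (fun x => g x - G x / x - (1 / β) * Real.log x)
          (g' x - (x * g' x * x - G x * 1) / x ^ 2 - (1 / β) * x⁻¹) x := by
        intro x hx
        have hx' := Set.Ioo_subset_Icc_self hx
        have h0 := (hpos x hx').ne'
        exact ((hderiv x hx').sub ((hGd x hx).div (hasDerivAt_id x) h0)).sub
          ((Real.hasDerivAt_log h0).const_mul _)
      refine monotoneOn_of_hasDerivWithinAt_nonneg (convex_Icc r M) ?_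
        (f' := fun x => g' x - (x * g' x * x - G x * 1) / x ^ 2 - (1 / β) * x⁻¹) ?_ ?_
      · refine ContinuousOn.sub (ContinuousOn.sub ?_ ?_) ?_
        · exact fun x hx => (hderiv x hx).continuousAt.continuousWithinAt
        · exact hGc.div continuousOn_id fun x hx => (hpos x hx).ne'
        · exact continuousOn_const.mul
            (continuousOn_id.log fun x hx => (hpos x hx).ne')
      · intro x hx
        rw [interior_Icc] at hx
        exact (hd x hx).hasDerivWithinAt
      · intro x hx
        rw [interior_Icc] at hx
        have hx' := Set.Ioo_subset_Icc_self hx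
        have h0 := hpos x hx'
        have e : g' x - (x * g' x * x - G x * 1) / x ^ 2 - (1 / β) * x⁻¹
            = (G x - x / β) / x ^ 2 := by
          field_simp
          ring
        show 0 ≤ g' x - (x * g' x * x - G x * 1) / x ^ 2 - (1 / β) * x⁻¹
        rw [e]
        exact div_nonneg (sub_nonneg.2 (hG x hx')) (by positivity)
    intro x hx
    have h0 := hpos x hx
    have h1 := hmono (Set.left_mem_Icc.2 hrM) hx hx.1
    simp only [hG0] at h1
    have h2 : 1 / β ≤ G x / x := by
      rw [le_div_iff₀ h0]
      have := hG x hx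
      rwa [one_div_mul_eq_div]
    have h3 : (C - r * g r) / r = C / r - g r := by field_simp
    rw [h3, Real.log_div h0.ne' hr.ne', mul_sub]
    linarith
  refine ⟨main, fun hC x hx => ?_⟩
  have h := main x hx
  have e : (C - r * g r) / r = 1 / β - g r := by
    rw [hC]
    field_simp
  rw [e] at h
  linarith
end

section
/- Let 0 < L < U be reals, α ∈ (0,1), and let β be the unique positive solution of L·α·β = U·exp(β·(α−1)). Then for every β' > 0: α + (1/β')·ln( U/(α·β'·L) ) ≤ 1 if and only if β' ≥ β. (This is the analytic core of the Pareto-optimality lower bound: any α-CTIF deterministic online knapsack algorithm with competitive ratio β' must satisfy 1 = g(U) ≥ α + (1/β')·ln(U/(αβ'L)), hence β' ≥ β = W(U(1−α)/(Lα))/(1−α), where W is the Lambert W function.) -/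
/-- Analytic core of the Pareto-optimality lower bound: with `β` the unique
positive solution of `L·α·β = U·exp(β·(α−1))`, a candidate competitive ratio
`β' > 0` satisfies the feasibility constraint
`α + (1/β')·ln(U/(α·β'·L)) ≤ 1` if and only if `β' ≥ β`. -/
theorem pareto_lower_bound_core (L U α β : ℝ) (hL : 0 < L) (hLU : L < U)
    (hα : α ∈ Set.Ioo (0 : ℝ) 1) (hβ : 0 < β)
    (hfix : L * α * β = U * Real.exp (β * (α - 1))) :
    ∀ β' : ℝ, 0 < β' →
      (α + (1 / β') * Real.log (U / (α * β' * L)) ≤ 1 ↔ β ≤ β') := by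
  obtain ⟨h0, h1⟩ := hα
  intro b hb
  have hU : 0 < U := hL.trans hLU
  have e1 : Real.log (U / (α * b * L)) = Real.log β - Real.log b + β * (1 - α) := by
    have h := congrArg Real.log hfix
    rw [Real.log_mul (by positivity) hβ.ne', Real.log_mul hL.ne' h0.ne',
      Real.log_mul hU.ne' (Real.exp_ne_zero _), Real.log_exp] at h
    rw [Real.log_div hU.ne' (by positivity), Real.log_mul (by positivity) hL.ne',
      Real.log_mul h0.ne' hb.ne']
    linarith
  have e2 : α + (1 / b) * Real.log (U / (α * b * L)) ≤ 1 ↔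
      Real.log (U / (α * b * L)) ≤ (1 - α) * b := by
    rw [← div_le_iff₀ hb, one_div_mul_eq_div]
    constructor <;> intro h <;> linarith
  rw [e2, e1]
  constructor
  · intro h
    by_contra hlt
    push Not at hlt
    have := Real.log_lt_log hb hlt
    nlinarith
  · intro h
    have := Real.log_le_log hβ h
    nlinarith
end

section
/- Let 0 < L < U be reals and γ ∈ [0,1). For every z_T ∈ [(1−γ)/(ln(U/L)+1), 1−γ], ∫₀^{z_T} max( L, (L/e)·((Ue)/L)^{z/(1−γ)} ) dz = (1−γ)·(L/e)·((Ue)/L)^{z_T/(1−γ)} / (ln(U/L)+1); consequently (L/e)·((Ue)/L)^{z_T/(1−γ)} = ((ln(U/L)+1)/(1−γ)) · ∫₀^{z_T} max( L, (L/e)·((Ue)/L)^{z/(1−γ)} ) dz. (This is the integral identity for Case I of the proof that LA-ECT is (1/(1−γ))·(ln(U/L)+1)-robust, when the algorithm terminates before reaching the flat prediction region of its threshold.) -/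
/-- Case I of the LA-ECT robustness proof: for every
`z_T ∈ [(1−γ)/(ln(U/L)+1), 1−γ]`,
`∫₀^{z_T} max(L, (L/e)·((Ue)/L)^{z/(1−γ)}) dz
  = (1−γ)·(L/e)·((Ue)/L)^{z_T/(1−γ)}/(ln(U/L)+1)`; consequently the final
threshold value equals `((ln(U/L)+1)/(1−γ))` times the collected value. -/
theorem laect_robust_case1 (L U γ : ℝ) (hL : 0 < L) (hLU : L < U)
    (hγ : γ ∈ Set.Ico (0 : ℝ) 1) :
    ∀ zT ∈ Set.Icc ((1 - γ) / (Real.log (U / L) + 1)) (1 - γ),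
      (∫ z in (0 : ℝ)..zT,
          max L ((L / Real.exp 1) * ((U * Real.exp 1) / L) ^ (z / (1 - γ)))) =
        (1 - γ) * (L / Real.exp 1) * ((U * Real.exp 1) / L) ^ (zT / (1 - γ)) /
          (Real.log (U / L) + 1) ∧
      (L / Real.exp 1) * ((U * Real.exp 1) / L) ^ (zT / (1 - γ)) =
        ((Real.log (U / L) + 1) / (1 - γ)) *
          ∫ z in (0 : ℝ)..zT,
            max L ((L / Real.exp 1) * ((U * Real.exp 1) / L) ^ (z / (1 - γ))) := by
  intro zT hz
  obtain ⟨hz1, hz2⟩ := hz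
  have hc : 0 < 1 - γ := by linarith [hγ.2]
  have hU : 0 < U := hL.trans hLU
  have hK : 0 < Real.log (U / L) + 1 := by
    have : 0 < Real.log (U / L) := Real.log_pos ((one_lt_div hL).2 hLU)
    linarith
  have hlog : Real.log (U * Real.exp 1 / L) = Real.log (U / L) + 1 := by
    rw [mul_div_right_comm, Real.log_mul (by positivity) (by positivity), Real.log_exp]
  have key : ∀ z : ℝ, (L / Real.exp 1) * ((U * Real.exp 1) / L) ^ (z / (1 - γ)) =
      L * Real.exp ((Real.log (U / L) + 1) / (1 - γ) * z - 1) := by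
    intro z
    rw [Real.rpow_def_of_pos (by positivity), hlog, Real.exp_sub]
    have : (Real.log (U / L) + 1) * (z / (1 - γ)) =
      (Real.log (U / L) + 1) / (1 - γ) * z := by ring
    rw [this]
    ring
  have main : (∫ z in (0 : ℝ)..zT,
          max L ((L / Real.exp 1) * ((U * Real.exp 1) / L) ^ (z / (1 - γ)))) =
        (1 - γ) * (L / Real.exp 1) * ((U * Real.exp 1) / L) ^ (zT / (1 - γ)) /
          (Real.log (U / L) + 1) := by
    rw [mul_assoc (1 - γ)]
    simp only [key]
    generalize Real.log (U / L) + 1 = K at *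
    generalize 1 - γ = c at *
    have ha : 0 < K / c := by positivity
    have hac : c / K = (K / c)⁻¹ := by rw [inv_div]
    have ht0 : 0 < c / K := by positivity
    have hat : K / c * (c / K) = 1 := by field_simp
    have hcont : Continuous fun z : ℝ => max L (L * Real.exp (K / c * z - 1)) := by fun_prop
    rw [← intervalIntegral.integral_add_adjacent_intervals
      (hcont.intervalIntegrable 0 (c / K)) (hcont.intervalIntegrable (c / K) zT)]
    have h1 : (∫ z in (0 : ℝ)..(c / K), max L (L * Real.exp (K / c * z - 1))) =
        ∫ z in (0 : ℝ)..(c / K), L := by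
      apply intervalIntegral.integral_congr
      intro z hz
      rw [Set.uIcc_of_le ht0.le] at hz
      apply max_eq_left
      have h := mul_le_mul_of_nonneg_left hz.2 ha.le
      have : Real.exp (K / c * z - 1) ≤ 1 := Real.exp_le_one_iff.2 (by linarith)
      nlinarith
    have h2 : (∫ z in (c / K)..zT, max L (L * Real.exp (K / c * z - 1))) =
        ∫ z in (c / K)..zT, L * Real.exp (K / c * z - 1) := by
      apply intervalIntegral.integral_congr
      intro z hz
      rw [Set.uIcc_of_le hz1] at hz
      apply max_eq_right
      have h := mul_le_mul_of_nonneg_left hz.1 ha.le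
      have : 1 ≤ Real.exp (K / c * z - 1) := Real.one_le_exp (by linarith)
      nlinarith
    have h3 : (∫ z in (c / K)..zT, L * Real.exp (K / c * z - 1)) =
        (c / K) * (L * Real.exp (K / c * zT - 1)) -
        (c / K) * (L * Real.exp (K / c * (c / K) - 1)) := by
      apply intervalIntegral.integral_eq_sub_of_hasDerivAt
        (f := fun z => (c / K) * (L * Real.exp (K / c * z - 1)))
      · intro z _
        have h := (((((hasDerivAt_id z).const_mul (K / c)).sub_const 1).exp).const_mul
          L).const_mul (c / K)
        refine h.congr_deriv ?_
        simp only [id]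
        linear_combination (L * Real.exp (K / c * z - 1)) * hat
      · exact Continuous.intervalIntegrable (by fun_prop) _ _
    rw [h1, h2, h3, hat, intervalIntegral.integral_const]
    simp only [sub_self, Real.exp_zero, smul_eq_mul]
    ring
  refine ⟨main, ?_⟩
  rw [main]
  field_simp
end

section
/- Let 0 < L < U be reals, γ ∈ [0,1), d̂ ∈ [L,U], κ = (1−γ)·ln(d̂·e/L)/(ln(U/L)+1), and let Ψ^{γ,d̂} be defined by Ψ^{γ,d̂}(z) = (L/e)·((Ue)/L)^{z/(1−γ)} for z ∈ [0,κ], Ψ^{γ,d̂}(z) = d̂ for z ∈ (κ, κ+γ), and Ψ^{γ,d̂}(z) = (L/e)·((Ue)/L)^{(z−γ)/(1−γ)} for z ∈ [κ+γ, 1]. Then for every z_T ∈ [κ+γ, 1], ∫₀^{z_T} max( L, Ψ^{γ,d̂}(z) ) dz = (1−γ)·(L/e)·((Ue)/L)^{(z_T−γ)/(1−γ)} / (ln(U/L)+1) + γ·d̂, and consequently Ψ^{γ,d̂}(z_T) ≤ ((ln(U/L)+1)/(1−γ)) · ∫₀^{z_T} max( L, Ψ^{γ,d̂}(z) ) dz.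 (This is Case III of the proof that LA-ECT is (1/(1−γ))·(ln(U/L)+1)-robust.) -/
theorem laect_piece (f g F : ℝ → ℝ) (a b : ℝ) (hab : a ≤ b) (hg : Continuous g)
    (hF : ∀ x, HasDerivAt F (g x) x) (h : ∀ x, a ≤ x → x ≤ b → f x = g x) :
    IntervalIntegrable f MeasureTheory.volume a b ∧ (∫ z in a..b, f z) = F b - F a := by
  have he : Set.EqOn g f (Set.uIcc a b) := by
    intro x hx
    rw [Set.uIcc_of_le hab] at hx
    exact (h x hx.1 hx.2).symm
  constructor
  · exact (hg.intervalIntegrable a b).congr (fun x hx => he (Set.uIoc_subset_uIcc hx))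
  · rw [← intervalIntegral.integral_congr he]
    exact intervalIntegral.integral_eq_sub_of_hasDerivAt (fun x _ => hF x)
      (hg.intervalIntegrable a b)

/-- Case III of the LA-ECT robustness proof: for every `z_T ∈ [κ+γ, 1]`,
`∫₀^{z_T} max(L, Ψ^{γ,d̂}(z)) dz
  = (1−γ)·(L/e)·((Ue)/L)^{(z_T−γ)/(1−γ)}/(ln(U/L)+1) + γ·d̂`, and consequently
`Ψ^{γ,d̂}(z_T) ≤ ((ln(U/L)+1)/(1−γ)) · ∫₀^{z_T} max(L, Ψ^{γ,d̂}(z)) dz`. -/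
theorem laect_robust_case3 (L U γ d : ℝ) (hL : 0 < L) (hLU : L < U)
    (hγ : γ ∈ Set.Ico (0 : ℝ) 1) (hd : d ∈ Set.Icc L U)
    (κ : ℝ) (hκ : κ = (1 - γ) * Real.log (d * Real.exp 1 / L) / (Real.log (U / L) + 1))
    (Ψ : ℝ → ℝ)
    (hΨ : ∀ z, Ψ z =
      if z ≤ κ then (L / Real.exp 1) * ((U * Real.exp 1) / L) ^ (z / (1 - γ))
      else if z < κ + γ then d
      else (L / Real.exp 1) * ((U * Real.exp 1) / L) ^ ((z - γ) / (1 - γ))) :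
    ∀ zT ∈ Set.Icc (κ + γ) (1 : ℝ),
      (∫ z in (0 : ℝ)..zT, max L (Ψ z)) =
        (1 - γ) * (L / Real.exp 1) * ((U * Real.exp 1) / L) ^ ((zT - γ) / (1 - γ)) /
          (Real.log (U / L) + 1) + γ * d ∧
      Ψ zT ≤ ((Real.log (U / L) + 1) / (1 - γ)) *
        ∫ z in (0 : ℝ)..zT, max L (Ψ z) := by
  obtain ⟨hγ0, hγ1⟩ := hγ
  obtain ⟨hLd, hdU⟩ := hd
  have hU : 0 < U := hL.trans hLU
  have hd0 : 0 < d := hL.trans_le hLd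
  have hg : 0 < 1 - γ := by linarith
  have hlog : 0 < Real.log (U / L) := Real.log_pos ((one_lt_div hL).2 hLU)
  have hlogd : 0 ≤ Real.log (d / L) := Real.log_nonneg ((one_le_div hL).2 hLd)
  obtain ⟨A, hA⟩ : ∃ A, A = Real.log (U / L) + 1 := ⟨_, rfl⟩
  rw [← hA] at hκ ⊢
  have hA0 : 0 < A := by linarith
  have he := Real.exp_pos 1
  have hbase : ∀ x, ((U * Real.exp 1) / L) ^ x = Real.exp (A * x) := by
    intro x
    have h1 : U * Real.exp 1 / L = Real.exp A := by
      rw [hA, Real.exp_add, Real.exp_log (by positivity)]; ring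
    rw [h1, ← Real.exp_mul]
  have hdl : Real.log (d * Real.exp 1 / L) = Real.log (d / L) + 1 := by
    rw [show d * Real.exp 1 / L = (d / L) * Real.exp 1 by ring,
      Real.log_mul (by positivity) (by positivity), Real.log_exp]
  rw [hdl] at hκ
  obtain ⟨a, ha⟩ : ∃ a, a = A / (1 - γ) := ⟨_, rfl⟩
  have ha0 : 0 < a := by rw [ha]; positivity
  have hAa : ∀ x, A * (x / (1 - γ)) = a * x := by intro x; rw [ha]; ring
  simp only [hbase, hAa] at hΨ ⊢
  have haκ : a * κ = Real.log (d / L) + 1 := by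
    rw [hκ, ha]; field_simp
  have hEκ : L / Real.exp 1 * Real.exp (a * κ) = d := by
    rw [haκ, Real.exp_add, Real.exp_log (by positivity)]; field_simp
  have has : a * (1 / a) = 1 := by field_simp
  have hs0 : 0 < 1 / a := by positivity
  generalize 1 / a = s at has hs0
  have hsκ : s ≤ κ := by
    refine le_of_mul_le_mul_left ?_ ha0
    linarith
  have hEs : L / Real.exp 1 * Real.exp (a * s) = L := by
    rw [has]; field_simp
  have hmono : ∀ x y, x ≤ y →
      L / Real.exp 1 * Real.exp (a * x) ≤ L / Real.exp 1 * Real.exp (a * y) := by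
    intro x y h
    gcongr
  intro zT hzT
  obtain ⟨hz1, hz2⟩ := hzT
  have hder : ∀ c x, HasDerivAt (fun z => L / Real.exp 1 * Real.exp (a * (z - c)) / a)
      (L / Real.exp 1 * Real.exp (a * (x - c))) x := by
    intro c x
    have h1 : HasDerivAt (fun z : ℝ => a * (z - c)) (a * 1) x :=
      ((hasDerivAt_id x).sub_const c).const_mul a
    have h2 := (h1.exp.const_mul (L / Real.exp 1)).div_const a
    refine h2.congr_deriv ?_
    field_simp
  have P1 := laect_piece (fun z => max L (Ψ z)) (fun _ => L) (fun z => L * z) 0 s hs0.le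
    continuous_const (fun x => by simpa using (hasDerivAt_id x).const_mul L) (by
      intro x _ hx
      have := hmono x s hx
      simp only [hΨ, if_pos (hx.trans hsκ)]
      apply max_eq_left
      linarith)
  have P2 := laect_piece (fun z => max L (Ψ z))
    (fun x => L / Real.exp 1 * Real.exp (a * (x - 0))) _ s κ hsκ
    (by fun_prop) (hder 0) (by
      intro x hx hx2
      have := hmono s x hx
      simp only [hΨ, if_pos hx2, sub_zero]
      apply max_eq_right
      linarith)
  have P3 := laect_piece (fun z => max L (Ψ z)) (fun _ => d) (fun z => d * z) κ (κ + γ)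
    (by linarith)
    continuous_const (fun x => by simpa using (hasDerivAt_id x).const_mul d) (by
      intro x hx hx2
      have : Ψ x = d := by
        rw [hΨ]
        split_ifs with h1 h2
        · rw [le_antisymm h1 hx, hEκ]
        · rfl
        · rw [show x - γ = κ by linarith, hEκ]
      simp only [this]
      exact max_eq_right hLd)
  have h4 : ∀ x, κ + γ ≤ x → Ψ x = L / Real.exp 1 * Real.exp (a * (x - γ)) := by
    intro x hx
    rw [hΨ]
    split_ifs with h1 h2
    · have : γ = 0 := by linarith
      rw [this, sub_zero]
    · linarith
    · rfl
  have P4 := laect_piece (fun z => max L (Ψ z))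
    (fun x => L / Real.exp 1 * Real.exp (a * (x - γ))) _ (κ + γ) zT hz1
    (by fun_prop) (hder γ) (by
      intro x hx hx2
      have := hmono κ (x - γ) (by linarith)
      simp only [h4 x hx]
      apply max_eq_right
      linarith)
  have key : (∫ z in (0 : ℝ)..zT, max L (Ψ z)) =
      (1 - γ) * (L / Real.exp 1) * Real.exp (a * (zT - γ)) / A + γ * d := by
    rw [← intervalIntegral.integral_add_adjacent_intervals
        ((P1.1.trans P2.1).trans P3.1) P4.1,
      ← intervalIntegral.integral_add_adjacent_intervals (P1.1.trans P2.1) P3.1,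
      ← intervalIntegral.integral_add_adjacent_intervals P1.1 P2.1, P1.2, P2.2, P3.2, P4.2]
    simp only [sub_zero, add_sub_cancel_right, hEκ, hEs]
    have hs : s = 1 / a := by field_simp; linarith
    rw [hs, ha]
    field_simp
    ring
  refine ⟨key, ?_⟩
  rw [key, h4 zT hz1, ← ha, mul_add]
  have h5 : a * ((1 - γ) * (L / Real.exp 1) * Real.exp (a * (zT - γ)) / A) =
      L / Real.exp 1 * Real.exp (a * (zT - γ)) := by
    generalize Real.exp (a * (zT - γ)) = E
    rw [ha]; field_simp
  rw [h5]
  have : 0 ≤ a * (γ * d) := by positivity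
  linarith
end
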